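/- arXiv:1605.05094 — 2 statements merged into one kernel-verified Lean document; each statement's English description precedes it below -/
import Mathlib

section
/- Let E_μ be a sublinear operator on 𝒳 and let D be a nonempty convex subset of 𝒳. Then there exists a linear functional P_α : 𝒳 → ℝ dominated by E_μ such that inf_{X ∈ D} P_α(X) = inf_{X ∈ D} E_μ[X]. -/
open MeasureTheory Filter Topology
open scoped ENNReal

/-- `X` belongs to the space `𝒳` of bounded measurable real-valued functions on `Ω`. -/
def MemX {Ω : Type*} [MeasurableSpace Ω] (X : Ω → ℝ) : Prop :=
  Measurable X ∧ ∃ M : ℝ, ∀ ω, |X ω| ≤ M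

/-- A sublinear operator on `𝒳`: monotone, constant preserving, subadditive and
positively homogeneous. -/
def IsSublinearOp {Ω : Type*} [MeasurableSpace Ω] (ρ : (Ω → ℝ) → ℝ) : Prop :=
  (∀ X Y : Ω → ℝ, MemX X → MemX Y → (∀ ω, Y ω ≤ X ω) → ρ Y ≤ ρ X) ∧
  (∀ c : ℝ, ρ (fun _ => c) = c) ∧
  (∀ X Y : Ω → ℝ, MemX X → MemX Y → ρ (X + Y) ≤ ρ X + ρ Y) ∧
  (∀ c : ℝ, 0 ≤ c → ∀ X : Ω → ℝ, MemX X → ρ (c • X) = c * ρ X)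

/-- A linear functional on `𝒳`. -/
def IsLinearOp {Ω : Type*} [MeasurableSpace Ω] (L : (Ω → ℝ) → ℝ) : Prop :=
  (∀ X Y : Ω → ℝ, MemX X → MemX Y → L (X + Y) = L X + L Y) ∧
  (∀ (c : ℝ) (X : Ω → ℝ), MemX X → L (c • X) = c * L X)

/-- `L` is dominated by `ρ` on `𝒳`. -/
def Dominated {Ω : Type*} [MeasurableSpace Ω] (L ρ : (Ω → ℝ) → ℝ) : Prop :=
  ∀ X : Ω → ℝ, MemX X → L X ≤ ρ X

/-- The conjugate operator `E_ῡ[X] := -E_υ[-X]`. -/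
def conjOp {Ω : Type*} (ρ : (Ω → ℝ) → ℝ) : (Ω → ℝ) → ℝ := fun X => -ρ (-X)

/-- The set `𝒳_α` of test functions at significance level `α`. -/
def testSet {Ω : Type*} [MeasurableSpace Ω] (Emu : (Ω → ℝ) → ℝ) (α : ℝ) : Set (Ω → ℝ) :=
  {X | MemX X ∧ (∀ ω, 0 ≤ X ω ∧ X ω ≤ 1) ∧ Emu X ≤ α}

/-!
For a sublinear `N` on a real vector space `E` and a convex set `D`, let `K ⊆ E × ℝ` be the cone
generated by the pairs `(y, m)` with `y ∈ D` and `m` a lower bound of `N` on `D`. Since `D` is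
convex, `K` lies below the graph of `N`, so the cone `epi N - K` meets the vertical axis only in
its nonnegative half. By the M. Riesz extension theorem the height on that axis extends to a
functional `G` on `E × ℝ` that is nonnegative on `epi N - K`. Then `g x = -G (x, 0)` is at most `N`
because `G` is nonnegative on `epi N`, and is at least every such `m` on `D` because `G` is
nonpositive on `K`.
-/

section ConeHull

variable {𝕜 E : Type*} [Field 𝕜] [LinearOrder 𝕜] [IsStrictOrderedRing 𝕜] [AddCommGroup E]
  [Module 𝕜 E]

theorem exists_smul_eq_of_mem_hull_of_convex {C : Set E} (hC : Convex 𝕜 C) (hne : C.Nonempty)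
    {x : E} (hx : x ∈ PointedCone.hull 𝕜 C) : ∃ t : 𝕜, 0 ≤ t ∧ ∃ c ∈ C, t • c = x := by
  induction hx using Submodule.span_induction with
  | mem x hx => exact ⟨1, zero_le_one, x, hx, one_smul 𝕜 x⟩
  | zero => exact ⟨0, le_rfl, hne.some, hne.some_mem, zero_smul 𝕜 _⟩
  | add x y _ _ hx hy =>
    obtain ⟨s, hs, a, ha, rfl⟩ := hx
    obtain ⟨t, ht, b, hb, rfl⟩ := hy
    obtain ⟨c, hc, hsum⟩ := hC.exists_mem_add_smul_eq ha hb hs ht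
    exact ⟨s + t, add_nonneg hs ht, c, hc, hsum⟩
  | smul r x _ hx =>
    obtain ⟨t, ht, c, hc, rfl⟩ := hx
    exact ⟨r * t, mul_nonneg r.2 ht, c, hc, mul_smul (r : 𝕜) t c⟩

theorem snd_le_of_mem_hull {N : E → 𝕜}
    (N_hom : ∀ c : 𝕜, 0 ≤ c → ∀ x, N (c • x) = c * N x) {C : Set (E × 𝕜)} (hC : Convex 𝕜 C)
    (hCN : ∀ c ∈ C, c.2 ≤ N c.1) {k : E × 𝕜} (hk : k ∈ PointedCone.hull 𝕜 C) :
    k.2 ≤ N k.1 := by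
  rcases C.eq_empty_or_nonempty with rfl | hne
  · obtain rfl : k = 0 := by simpa using hk
    simpa using (N_hom 0 le_rfl 0).ge
  · obtain ⟨t, ht, c, hc, rfl⟩ := exists_smul_eq_of_mem_hull_of_convex hC hne hk
    simpa [N_hom t ht] using mul_le_mul_of_nonneg_left (hCN c hc) ht

end ConeHull

section Sublinear

open scoped Pointwise

variable {E : Type*} [AddCommGroup E] [Module ℝ E] {N : E → ℝ}
  (N_hom : ∀ c : ℝ, 0 ≤ c → ∀ x, N (c • x) = c * N x)
  (N_add : ∀ x y, N (x + y) ≤ N x + N y)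

/-- The epigraph of a sublinear function `N`, as a pointed cone in `E × ℝ`: linear functionals
dominated by `N` correspond to functionals on `E × ℝ` that are nonnegative on this cone and
restrict to the height on the vertical axis. -/
def epigraphCone : PointedCone ℝ (E × ℝ) where
  carrier := {p | N p.1 ≤ p.2}
  zero_mem' := by simpa using (N_hom 0 le_rfl 0).le
  add_mem' hp hq := (N_add _ _).trans (add_le_add hp hq)
  smul_mem' c p hp := (N_hom c c.2 p.1).trans_le (mul_le_mul_of_nonneg_left hp c.2)

theorem mem_epigraphCone {p : E × ℝ} : p ∈ epigraphCone N_hom N_add ↔ N p.1 ≤ p.2 := Iff.rfl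

theorem snd_nonneg_of_mem_epigraphCone_sup_neg {K : PointedCone ℝ (E × ℝ)}
    (hK : ∀ k ∈ K, k.2 ≤ N k.1) {r : ℝ} (hr : (0, r) ∈ epigraphCone N_hom N_add ⊔ -K) :
    0 ≤ r := by
  obtain ⟨p, hp, q, hq, hpq⟩ := Submodule.mem_sup.1 hr
  obtain ⟨hfst, hsnd⟩ := Prod.ext_iff.1 hpq
  have hle : -q.2 ≤ p.2 := calc
    -q.2 ≤ N (-q.1) := hK (-q) hq
    _ = N p.1 := by rw [eq_neg_of_add_eq_zero_left hfst]
    _ ≤ p.2 := hp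
  simp only [Prod.snd_add] at hsnd
  linarith

include N_hom N_add

theorem exists_linear_le_of_snd_le {K : PointedCone ℝ (E × ℝ)} (hK : ∀ k ∈ K, k.2 ≤ N k.1) :
    ∃ g : E →ₗ[ℝ] ℝ, (∀ x, g x ≤ N x) ∧ ∀ k ∈ K, k.2 ≤ g k.1 := by
  let f : E × ℝ →ₗ.[ℝ] ℝ :=
    (LinearMap.snd ℝ E ℝ).toPMap (LinearMap.range (LinearMap.inr ℝ E ℝ))
  obtain ⟨G, hGf, hG⟩ := riesz_extension (epigraphCone N_hom N_add ⊔ -K) f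
    (by
      rintro ⟨_, r, rfl⟩ hr
      exact snd_nonneg_of_mem_epigraphCone_sup_neg N_hom N_add hK hr)
    (fun p => ⟨⟨(0, N p.1 - p.2), _, rfl⟩,
      Submodule.mem_sup_left (by simp [mem_epigraphCone])⟩)
  have hG_apply (x : E) (r : ℝ) : G (x, r) = G (x, 0) + r := by
    have hr : G (0, r) = r := hGf ⟨(0, r), r, rfl⟩
    nth_rw 2 [← hr]
    rw [← map_add, Prod.mk_add_mk, add_zero, zero_add]
  refine ⟨-G.comp (LinearMap.inl ℝ E ℝ), fun x => ?_, fun k hk => ?_⟩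
  · have hx : 0 ≤ G (x, N x) := hG _ <|
      Submodule.mem_sup_left <| (mem_epigraphCone N_hom N_add).2 le_rfl
    rw [hG_apply] at hx
    exact neg_le_iff_add_nonneg'.2 hx
  · have hk' : 0 ≤ G (-k) := hG _ <|
      Submodule.mem_sup_right <| Submodule.mem_neg.2 <| by rwa [neg_neg]
    rw [map_neg, neg_nonneg, hG_apply k.1 k.2] at hk'
    exact le_neg_iff_add_nonpos_left.2 hk'

theorem exists_linear_le_lowerBounds_image_eq {D : Set E} (hD : Convex ℝ D) :
    ∃ g : E →ₗ[ℝ] ℝ, (∀ x, g x ≤ N x) ∧ lowerBounds (g '' D) = lowerBounds (N '' D) := by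
  have hlower : IsLowerSet (lowerBounds (N '' D)) := fun _ _ hba ha _ hy => hba.trans (ha hy)
  have hconv : Convex ℝ (D ×ˢ lowerBounds (N '' D)) := hD.prod hlower.ordConnected.convex
  obtain ⟨g, hgN, hg⟩ := exists_linear_le_of_snd_le N_hom N_add fun k hk =>
    snd_le_of_mem_hull N_hom hconv (fun c hc => hc.2 ⟨c.1, hc.1, rfl⟩) hk
  refine ⟨g, hgN, Set.Subset.antisymm (fun m hm => ?_) fun m hm => ?_⟩
  · rintro _ ⟨x, hx, rfl⟩
    exact (hm ⟨x, hx, rfl⟩).trans (hgN x)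
  · rintro _ ⟨x, hx, rfl⟩
    exact hg (x, m) (PointedCone.subset_hull ⟨hx, hm⟩)

end Sublinear

theorem csInf_eq_csInf_of_lowerBounds_eq {α : Type*} [ConditionallyCompleteLinearOrder α]
    {s t : Set α} (hs : s.Nonempty) (ht : t.Nonempty) (h : lowerBounds s = lowerBounds t) :
    sInf s = sInf t := by
  by_cases hb : BddBelow s
  · have hbt : BddBelow t := by rwa [BddBelow, ← h]
    rw [← csSup_lowerBounds_eq_csInf hb hs, h, csSup_lowerBounds_eq_csInf hbt ht]
  · have hbt : ¬BddBelow t := by rwa [BddBelow, ← h]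
    rw [ConditionallyCompleteLinearOrder.csInf_of_not_bddBelow s hb,
      ConditionallyCompleteLinearOrder.csInf_of_not_bddBelow t hbt]

theorem exists_dominated_linear_inf_eq_general {V : Type*} [AddCommGroup V] [Module ℝ V]
    (F : Submodule ℝ V) (ρ : V → ℝ) (ρ_add : ∀ x ∈ F, ∀ y ∈ F, ρ (x + y) ≤ ρ x + ρ y)
    (ρ_hom : ∀ c : ℝ, 0 ≤ c → ∀ x ∈ F, ρ (c • x) = c * ρ x)
    {D : Set V} (hD : D.Nonempty) (hconv : Convex ℝ D) (hDF : D ⊆ F) :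
    ∃ g : V →ₗ[ℝ] ℝ, (∀ x ∈ F, g x ≤ ρ x) ∧ sInf (g '' D) = sInf (ρ '' D) := by
  obtain ⟨g, hgρ, hlow⟩ := exists_linear_le_lowerBounds_image_eq (N := fun x : F => ρ x)
    (fun c hc x => ρ_hom c hc x x.2) (fun x y => ρ_add x x.2 y y.2)
    (hconv.linear_preimage F.subtype)
  obtain ⟨G, rfl⟩ := g.exists_extend
  have himage : F.subtype '' (F.subtype ⁻¹' D) = D :=
    Set.image_preimage_eq_of_subset (by simpa using hDF)
  refine ⟨G, fun x hx => hgρ ⟨x, hx⟩,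
    csInf_eq_csInf_of_lowerBounds_eq (hD.image G) (hD.image ρ) ?_⟩
  rw [← himage, Set.image_image, Set.image_image]
  exact hlow

/-- The space `𝒳` of bounded measurable functions, as a subspace of all functions `Ω → ℝ`,
on which sublinear operators obey their axioms. -/
def boundedMeasurable (Ω : Type*) [MeasurableSpace Ω] : Submodule ℝ (Ω → ℝ) where
  carrier := {X | MemX X}
  zero_mem' := ⟨measurable_const, 0, by simp⟩
  add_mem' := by
    rintro X Y ⟨hX, M, hM⟩ ⟨hY, K, hK⟩
    exact ⟨hX.add hY, M + K, fun ω => (abs_add_le _ _).trans (add_le_add (hM ω) (hK ω))⟩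
  smul_mem' := by
    rintro c X ⟨hX, M, hM⟩
    refine ⟨hX.const_smul c, |c| * M, fun ω => ?_⟩
    rw [Pi.smul_apply, smul_eq_mul, abs_mul]
    exact mul_le_mul_of_nonneg_left (hM ω) (abs_nonneg c)

/-- Remark 4.3: for a nonempty convex subset `D` of `𝒳`, there is a linear functional
`P_α` dominated by `E_μ` with `inf_{X ∈ D} P_α(X) = inf_{X ∈ D} E_μ[X]`. -/
theorem exists_dominated_linear_inf_eq {Ω : Type*} [MeasurableSpace Ω]
    (Emu : (Ω → ℝ) → ℝ) (hEmu : IsSublinearOp Emu)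
    (D : Set (Ω → ℝ)) (hD : D.Nonempty) (hconv : Convex ℝ D)
    (hDX : ∀ X ∈ D, MemX X) :
    ∃ P : (Ω → ℝ) → ℝ, IsLinearOp P ∧ Dominated P Emu ∧
      sInf (P '' D) = sInf (Emu '' D) := by
  obtain ⟨P, hP, hinf⟩ := exists_dominated_linear_inf_eq_general (boundedMeasurable Ω) Emu
    (fun X hX Y hY => hEmu.2.2.1 X Y hX hY) hEmu.2.2.2 hD hconv hDX
  exact ⟨P, ⟨fun X Y _ _ => map_add P X Y, fun c X _ => map_smul P c X⟩, hP, hinf⟩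
end

section
/- Assume hypotheses (H1) and (H2). If X_α is an optimal solution of Problem 2.1, then (1−λ)·Q_α^p(X_α) = 1−λ. -/
open MeasureTheory Filter Topology
open scoped ENNReal

/-- A positive normalized linear functional `Qp` is *pure additive* if there is a
sequence of measurable sets `A n ↓ ∅` with `Qp(1_{A n}) → 1`. -/
def PureAdditive {Ω : Type*} [MeasurableSpace Ω] (Qp : (Ω → ℝ) → ℝ) : Prop :=
  ∃ A : ℕ → Set Ω, (∀ n, MeasurableSet (A n)) ∧ Antitone A ∧ (⋂ n, A n) = ∅ ∧
    Tendsto (fun n => Qp ((A n).indicator fun _ => (1 : ℝ))) atTop (𝓝 1)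

/-- Hypothesis (H1): for every sequence of measurable sets `A n ↓ ∅` such that
`lim E_υ[1_{A n}]` exists and is nonzero, one has `lim E_μ[1_{A n}] = 0`. -/
def HypH1 {Ω : Type*} [MeasurableSpace Ω] (Emu Eups : (Ω → ℝ) → ℝ) : Prop :=
  ∀ A : ℕ → Set Ω, (∀ n, MeasurableSet (A n)) → Antitone A → (⋂ n, A n) = ∅ →
    ∀ l : ℝ, Tendsto (fun n => Eups ((A n).indicator fun _ => (1 : ℝ))) atTop (𝓝 l) →
      l ≠ 0 →
      Tendsto (fun n => Emu ((A n).indicator fun _ => (1 : ℝ))) atTop (𝓝 0)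

/-- Hypothesis (H2): for every `X ∈ 𝒳_α` with `E_μ[X] > 0` and every positive
integer `K`, `E_μ[X] > E_μ[(X - 1/K)⁺]`. -/
def HypH2 {Ω : Type*} [MeasurableSpace Ω] (Emu : (Ω → ℝ) → ℝ) (α : ℝ) : Prop :=
  ∀ X ∈ testSet Emu α, 0 < Emu X → ∀ K : ℕ, 0 < K →
    Emu (fun ω => max (X ω - 1 / (K : ℝ)) 0) < Emu X

/-- Hypothesis (H3): for every sequence of measurable sets `A n ↓ ∅`,
`lim E_μ[1_{A n}] < 1` and `lim E_υ[1_{A n}] < 1`. -/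
def HypH3 {Ω : Type*} [MeasurableSpace Ω] (Emu Eups : (Ω → ℝ) → ℝ) : Prop :=
  ∀ A : ℕ → Set Ω, (∀ n, MeasurableSet (A n)) → Antitone A → (⋂ n, A n) = ∅ →
    (∀ l : ℝ, Tendsto (fun n => Emu ((A n).indicator fun _ => (1 : ℝ))) atTop (𝓝 l) →
      l < 1) ∧
    (∀ l : ℝ, Tendsto (fun n => Eups ((A n).indicator fun _ => (1 : ℝ))) atTop (𝓝 l) →
      l < 1)

/-!
Suppose `Q_α` puts weight `b > 0` on its pure part, and let `A n ↓ ∅` carry the whole mass of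
`Q_α^p`. Domination keeps `E_υ[1_{A n}]` away from `0`, so (H1) forces `E_μ[1_{A n}] → 0`. By (H2),
lowering `X_α` to `(X_α - 1/K)⁺` pushes its `E_μ`-value strictly below `α`, which leaves room to add
`1_{A n}`: for large `n` the test `(X_α - 1/K)⁺ ⊔ 1_{A n}` still has level `α`. An optimal `X_α`
also maximizes `Q_α`, so it beats this competitor, which loses at most `O(1/K)` in the countably
additive part while its pure part is at least `Q_α^p(1_{A n}) → 1`. Now let `n → ∞`, then `K → ∞`.
-/

section BoundedMeasurable

variable {Ω : Type*} [MeasurableSpace Ω] {X Y : Ω → ℝ}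

theorem memX_const (c : ℝ) : MemX fun _ : Ω => c :=
  ⟨measurable_const, |c|, fun _ => le_rfl⟩

theorem memX_indicator_one {s : Set Ω} (hs : MeasurableSet s) :
    MemX (s.indicator fun _ => (1 : ℝ)) := by
  refine ⟨measurable_const.indicator hs, 1, fun ω => ?_⟩
  by_cases h : ω ∈ s <;> simp [h]

theorem MemX.add (hX : MemX X) (hY : MemX Y) : MemX (X + Y) := by
  obtain ⟨hXm, M, hM⟩ := hX
  obtain ⟨hYm, N, hN⟩ := hY
  exact ⟨hXm.add hYm, M + N, fun ω => (abs_add_le _ _).trans (add_le_add (hM ω) (hN ω))⟩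

theorem MemX.neg (hX : MemX X) : MemX (-X) := by
  obtain ⟨hXm, M, hM⟩ := hX
  exact ⟨hXm.neg, M, fun ω => by simpa using hM ω⟩

theorem MemX.sub (hX : MemX X) (hY : MemX Y) : MemX (X - Y) :=
  sub_eq_add_neg X Y ▸ hX.add hY.neg

theorem MemX.sup (hX : MemX X) (hY : MemX Y) : MemX (X ⊔ Y) := by
  obtain ⟨hXm, M, hM⟩ := hX
  obtain ⟨hYm, N, hN⟩ := hY
  exact ⟨hXm.sup hYm, max M N, fun ω => abs_max_le_max_abs_abs.trans (max_le_max (hM ω) (hN ω))⟩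

theorem MemX.posPart (hX : MemX X) : MemX X⁺ :=
  hX.sup (memX_const 0)

theorem MemX.integrable (hX : MemX X) (μ : Measure Ω) [IsFiniteMeasure μ] : Integrable X μ := by
  obtain ⟨hXm, M, hM⟩ := hX
  exact .of_bound hXm.aestronglyMeasurable M (.of_forall hM)

theorem integral_sub_mul_le_of_sub_le {μ : Measure Ω} [IsFiniteMeasure μ] {ε : ℝ}
    (hX : MemX X) (hY : MemX Y) (h : ∀ ω, X ω - ε ≤ Y ω) :
    ∫ ω, X ω ∂μ - μ.real Set.univ * ε ≤ ∫ ω, Y ω ∂μ := by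
  have hε : Integrable (fun _ => ε) μ := integrable_const ε
  calc
    ∫ ω, X ω ∂μ - μ.real Set.univ * ε = ∫ ω, (X ω - ε) ∂μ := by
      rw [integral_sub (hX.integrable μ) hε, integral_const, smul_eq_mul]
    _ ≤ ∫ ω, Y ω ∂μ := integral_mono ((hX.integrable μ).sub hε) (hY.integrable μ) h

end BoundedMeasurable

section Functionals

variable {Ω : Type*} [MeasurableSpace Ω] {L ρ : (Ω → ℝ) → ℝ} {X : Ω → ℝ}

theorem IsSublinearOp.monotoneOn (hρ : IsSublinearOp ρ) : MonotoneOn ρ {X | MemX X} :=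
  fun X hX Y hY h => hρ.1 Y X hY hX h

theorem IsSublinearOp.map_add_le (hρ : IsSublinearOp ρ) :
    ∀ X Y : Ω → ℝ, MemX X → MemX Y → ρ (X + Y) ≤ ρ X + ρ Y :=
  hρ.2.2.1

theorem exists_tendsto_indicator_one_of_antitone (hρ : MonotoneOn ρ {X | MemX X})
    {A : ℕ → Set Ω} (hA : ∀ n, MeasurableSet (A n)) (hanti : Antitone A) :
    ∃ l, Tendsto (fun n => ρ ((A n).indicator fun _ => (1 : ℝ))) atTop (𝓝 l) := by
  have hdecr : Antitone fun n => ρ ((A n).indicator fun _ => (1 : ℝ)) := fun m n hmn =>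
    hρ (memX_indicator_one (hA n)) (memX_indicator_one (hA m))
      (Set.indicator_le_indicator_of_subset (hanti hmn) fun _ => zero_le_one)
  have hbdd : BddBelow (Set.range fun n => ρ ((A n).indicator fun _ => (1 : ℝ))) := by
    refine ⟨ρ fun _ => 0, ?_⟩
    rintro _ ⟨n, rfl⟩
    exact hρ (memX_const 0) (memX_indicator_one (hA n))
      (Set.indicator_nonneg fun _ _ => zero_le_one)
  exact ⟨_, tendsto_atTop_ciInf hdecr hbdd⟩

theorem IsLinearOp.map_neg (hL : IsLinearOp L) (hX : MemX X) : L (-X) = -L X := by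
  simpa using hL.2 (-1) X hX

theorem IsLinearOp.monotoneOn_of_nonneg (hL : IsLinearOp L)
    (hpos : ∀ X : Ω → ℝ, MemX X → (∀ ω, 0 ≤ X ω) → 0 ≤ L X) : MonotoneOn L {X | MemX X} := by
  intro X hX Y hY hXY
  have hdiff : 0 ≤ L (Y - X) := hpos _ (MemX.sub hY hX) fun ω => sub_nonneg.2 (hXY ω)
  rw [sub_eq_add_neg, hL.1 _ _ hY (MemX.neg hX), hL.map_neg hX] at hdiff
  linarith

theorem Dominated.conjOp_le (hdom : Dominated L ρ) (hL : IsLinearOp L) (hX : MemX X) :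
    conjOp ρ X ≤ L X := by
  have h := hdom (-X) hX.neg
  rw [hL.map_neg hX] at h
  exact neg_le.1 h

theorem Dominated.bddAbove_image_testSet (hdom : Dominated L ρ)
    (hρ : MonotoneOn ρ {X | MemX X}) (E : (Ω → ℝ) → ℝ) (α : ℝ) :
    BddAbove (L '' testSet E α) := by
  refine ⟨ρ fun _ => 1, ?_⟩
  rintro _ ⟨X, hX, rfl⟩
  exact (hdom X hX.1).trans (hρ hX.1 (memX_const 1) fun ω => (hX.2.1 ω).2)

theorem Dominated.isMaxOn_of_conjOp_eq_sSup (hdom : Dominated L ρ) (hL : IsLinearOp L)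
    {S : Set (Ω → ℝ)} (hbdd : BddAbove (L '' S))
    (hsup : sSup (L '' S) = sSup (conjOp ρ '' S)) (hX : MemX X)
    (hopt : conjOp ρ X = sSup (conjOp ρ '' S)) : IsMaxOn L S X := by
  intro Y hY
  calc
    L Y ≤ sSup (L '' S) := le_csSup hbdd (Set.mem_image_of_mem L hY)
    _ = conjOp ρ X := hsup.trans hopt.symm
    _ ≤ L X := hdom.conjOp_le hL hX

end Functionals

section Hypotheses

variable {Ω : Type*} [MeasurableSpace Ω] {Emu Eups Qp : (Ω → ℝ) → ℝ} {α : ℝ} {X : Ω → ℝ}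

theorem HypH1.exists_tendsto_zero_tendsto_one (hH1 : HypH1 Emu Eups)
    (hEups : MonotoneOn Eups {X | MemX X}) (hpure : PureAdditive Qp) {b : ℝ} (hb : 0 < b)
    (hle : ∀ X : Ω → ℝ, MemX X → (∀ ω, 0 ≤ X ω) → b * Qp X ≤ Eups X) :
    ∃ A : ℕ → Set Ω, (∀ n, MeasurableSet (A n)) ∧
      Tendsto (fun n => Emu ((A n).indicator fun _ => (1 : ℝ))) atTop (𝓝 0) ∧
      Tendsto (fun n => Qp ((A n).indicator fun _ => (1 : ℝ))) atTop (𝓝 1) := by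
  obtain ⟨A, hA, hanti, hempty, hQp⟩ := hpure
  obtain ⟨l, hl⟩ := exists_tendsto_indicator_one_of_antitone hEups hA hanti
  have hbl : b * 1 ≤ l := le_of_tendsto_of_tendsto' (hQp.const_mul b) hl fun n =>
    hle _ (memX_indicator_one (hA n)) (Set.indicator_nonneg fun _ _ => zero_le_one)
  exact ⟨A, hA, hH1 A hA hanti hempty l hl (by linarith), hQp⟩

theorem HypH2.apply_posPart_sub_lt (hH2 : HypH2 Emu α) (hα : 0 < α)
    (hEmu : MonotoneOn Emu {X | MemX X}) (hX : X ∈ testSet Emu α) {K : ℕ} (hK : 0 < K) :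
    Emu (X - fun _ => 1 / (K : ℝ))⁺ < α := by
  rcases le_or_gt (Emu X) 0 with hnonpos | hpos
  · have hdecr : (X - fun _ => 1 / (K : ℝ))⁺ ≤ X := fun ω =>
      max_le (sub_le_self _ (by positivity)) (hX.2.1 ω).1
    exact ((hEmu (hX.1.sub (memX_const _)).posPart hX.1 hdecr).trans hnonpos).trans_lt hα
  · exact (hH2 X hX hpos K hK).trans_le hX.2.2

theorem eventually_sup_indicator_one_mem_testSet (hEmu : MonotoneOn Emu {X | MemX X})
    (hadd : ∀ X Y : Ω → ℝ, MemX X → MemX Y → Emu (X + Y) ≤ Emu X + Emu Y)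
    (hX : MemX X) (hX01 : ∀ ω, 0 ≤ X ω ∧ X ω ≤ 1) (hlt : Emu X < α)
    {A : ℕ → Set Ω} (hA : ∀ n, MeasurableSet (A n))
    (hzero : Tendsto (fun n => Emu ((A n).indicator fun _ => (1 : ℝ))) atTop (𝓝 0)) :
    ∀ᶠ n in atTop, X ⊔ (A n).indicator (fun _ => (1 : ℝ)) ∈ testSet Emu α := by
  filter_upwards [hzero.eventually_lt_const (sub_pos.2 hlt)] with n hn
  set I : Ω → ℝ := (A n).indicator fun _ => (1 : ℝ)
  have hI : MemX I := memX_indicator_one (hA n)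
  have hI0 : ∀ ω, 0 ≤ I ω := Set.indicator_nonneg fun _ _ => zero_le_one
  have hI1 : ∀ ω, I ω ≤ 1 := Set.indicator_le_self' fun _ _ => zero_le_one
  refine ⟨hX.sup hI, fun ω => ⟨le_max_of_le_right (hI0 ω), max_le (hX01 ω).2 (hI1 ω)⟩, ?_⟩
  have hsup : X ⊔ I ≤ X + I := fun ω => max_le_add_of_nonneg (hX01 ω).1 (hI0 ω)
  calc
    Emu (X ⊔ I) ≤ Emu (X + I) := hEmu (hX.sup hI) (hX.add hI) hsup
    _ ≤ Emu X + Emu I := hadd X I hX hI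
    _ ≤ α := by linarith

end Hypotheses

section PurePart

variable {Ω : Type*} [MeasurableSpace Ω] {Emu Eups Qp Qa : (Ω → ℝ) → ℝ} {α a b : ℝ}
  {Qc : Measure Ω}

theorem mul_pure_part_le_of_dominated (hdom : Dominated Qa Eups)
    (hdec : ∀ X : Ω → ℝ, MemX X → Qa X = a * ∫ ω, X ω ∂Qc + b * Qp X) (ha : 0 ≤ a)
    {X : Ω → ℝ} (hX : MemX X) (hX0 : ∀ ω, 0 ≤ X ω) : b * Qp X ≤ Eups X :=
  calc
    b * Qp X ≤ a * ∫ ω, X ω ∂Qc + b * Qp X :=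
      le_add_of_nonneg_left (mul_nonneg ha (integral_nonneg hX0))
    _ = Qa X := (hdec X hX).symm
    _ ≤ Eups X := hdom X hX

theorem mul_pure_part_le_of_isMaxOn [IsFiniteMeasure Qc]
    (hQp : MonotoneOn Qp {X | MemX X})
    (hdec : ∀ X : Ω → ℝ, MemX X → Qa X = a * ∫ ω, X ω ∂Qc + b * Qp X)
    (ha : 0 ≤ a) (hb : 0 ≤ b) {S : Set (Ω → ℝ)} {X Z I : Ω → ℝ} {ε : ℝ}
    (hX : MemX X) (hmax : IsMaxOn Qa S X) (hZ : MemX Z) (hI : MemX I)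
    (hZX : ∀ ω, X ω - ε ≤ Z ω) (hZI : Z ⊔ I ∈ S) :
    b * Qp I ≤ b * Qp X + a * (Qc.real Set.univ * ε) := by
  have hY : MemX (Z ⊔ I) := hZ.sup hI
  have hcompare : Qa (Z ⊔ I) ≤ Qa X := hmax hZI
  rw [hdec _ hY, hdec _ hX] at hcompare
  have hcountable : a * (∫ ω, X ω ∂Qc - Qc.real Set.univ * ε) ≤ a * ∫ ω, (Z ⊔ I) ω ∂Qc :=
    mul_le_mul_of_nonneg_left
      (integral_sub_mul_le_of_sub_le hX hY fun ω => (hZX ω).trans le_sup_left) ha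
  have hpure : b * Qp I ≤ b * Qp (Z ⊔ I) :=
    mul_le_mul_of_nonneg_left (hQp hI hY le_sup_right) hb
  linarith

theorem le_mul_pure_part_add_of_isMaxOn [IsFiniteMeasure Qc]
    (hEmu : MonotoneOn Emu {X | MemX X})
    (hadd : ∀ X Y : Ω → ℝ, MemX X → MemX Y → Emu (X + Y) ≤ Emu X + Emu Y)
    (hα : 0 < α) (hH2 : HypH2 Emu α) (hQp : MonotoneOn Qp {X | MemX X})
    (hdec : ∀ X : Ω → ℝ, MemX X → Qa X = a * ∫ ω, X ω ∂Qc + b * Qp X)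
    (ha : 0 ≤ a) (hb : 0 ≤ b) {A : ℕ → Set Ω} (hA : ∀ n, MeasurableSet (A n))
    (hzero : Tendsto (fun n => Emu ((A n).indicator fun _ => (1 : ℝ))) atTop (𝓝 0))
    (hone : Tendsto (fun n => Qp ((A n).indicator fun _ => (1 : ℝ))) atTop (𝓝 1))
    {X : Ω → ℝ} (hX : X ∈ testSet Emu α) (hmax : IsMaxOn Qa (testSet Emu α) X)
    {K : ℕ} (hK : 0 < K) :
    b ≤ b * Qp X + a * (Qc.real Set.univ * (1 / (K : ℝ))) := by
  set Z : Ω → ℝ := (X - fun _ => 1 / (K : ℝ))⁺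
  have hZ : MemX Z := (hX.1.sub (memX_const _)).posPart
  have hZ01 : ∀ ω, 0 ≤ Z ω ∧ Z ω ≤ 1 := fun ω =>
    ⟨le_max_right _ _,
      max_le ((sub_le_self _ (by positivity)).trans (hX.2.1 ω).2) zero_le_one⟩
  have hcheap : Emu Z < α := hH2.apply_posPart_sub_lt hα hEmu hX hK
  have hlim : Tendsto (fun n => b * Qp ((A n).indicator fun _ => (1 : ℝ))) atTop (𝓝 b) := by
    simpa using hone.const_mul b
  refine le_of_tendsto hlim ?_
  filter_upwards
    [eventually_sup_indicator_one_mem_testSet hEmu hadd hZ hZ01 hcheap hA hzero] with n hn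
  exact mul_pure_part_le_of_isMaxOn hQp hdec ha hb hX.1 hmax hZ (memX_indicator_one (hA n))
    (fun ω => le_max_left _ _) hn

theorem pure_part_attains_one_general [IsFiniteMeasure Qc]
    (hEmu : MonotoneOn Emu {X | MemX X})
    (hadd : ∀ X Y : Ω → ℝ, MemX X → MemX Y → Emu (X + Y) ≤ Emu X + Emu Y)
    (hEups : MonotoneOn Eups {X | MemX X}) (hα : 0 < α) (ha : 0 ≤ a) (hb : 0 ≤ b)
    (hQplin : IsLinearOp Qp) (hQppos : ∀ X : Ω → ℝ, MemX X → (∀ ω, 0 ≤ X ω) → 0 ≤ Qp X)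
    (hQpone : Qp (fun _ => 1) = 1) (hQppure : PureAdditive Qp)
    (hQalin : IsLinearOp Qa) (hQadom : Dominated Qa Eups)
    (hQasup : sSup (Qa '' testSet Emu α) = sSup (conjOp Eups '' testSet Emu α))
    (hQadec : ∀ X : Ω → ℝ, MemX X → Qa X = a * ∫ ω, X ω ∂Qc + b * Qp X)
    (hH1 : HypH1 Emu Eups) (hH2 : HypH2 Emu α) {X : Ω → ℝ} (hX : X ∈ testSet Emu α)
    (hXopt : conjOp Eups X = sSup (conjOp Eups '' testSet Emu α)) :
    b * Qp X = b := by
  obtain rfl | hbpos := hb.eq_or_lt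
  · exact zero_mul _
  have hQp : MonotoneOn Qp {X | MemX X} := hQplin.monotoneOn_of_nonneg hQppos
  have hmax : IsMaxOn Qa (testSet Emu α) X :=
    hQadom.isMaxOn_of_conjOp_eq_sSup hQalin (hQadom.bddAbove_image_testSet hEups Emu α)
      hQasup hX.1 hXopt
  obtain ⟨A, hA, hzero, hone⟩ := hH1.exists_tendsto_zero_tendsto_one hEups hQppure hbpos
    fun Y => mul_pure_part_le_of_dominated hQadom hQadec ha
  have hupper : Qp X ≤ 1 := hQpone ▸ hQp hX.1 (memX_const 1) fun ω => (hX.2.1 ω).2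
  refine le_antisymm (mul_le_of_le_one_right hb hupper) ?_
  have hlim : Tendsto (fun K : ℕ => b * Qp X + a * (Qc.real Set.univ * (1 / (K : ℝ)))) atTop
      (𝓝 (b * Qp X)) := by
    simpa using
      ((tendsto_one_div_atTop_nhds_zero_nat.const_mul (Qc.real Set.univ)).const_mul a).const_add
        (b * Qp X)
  exact ge_of_tendsto hlim <| (eventually_gt_atTop 0).mono fun K hK =>
    le_mul_pure_part_add_of_isMaxOn hEmu hadd hα hH2 hQp hQadec ha hb hA hzero hone hX hmax hK

end PurePart

/-- Proposition 4.3: under (H1) and (H2), if `X_α` is an optimal solution of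
Problem 2.1, then `(1-λ)·Q_α^p(X_α) = 1-λ`. -/
theorem pure_part_attains_one {Ω : Type*} [MeasurableSpace Ω]
    (Emu Eups : (Ω → ℝ) → ℝ)
    (hEmu : IsSublinearOp Emu) (hEups : IsSublinearOp Eups)
    (α : ℝ) (hα0 : 0 < α) (hα1 : α < 1)
    (lam : ℝ) (hlam0 : 0 ≤ lam) (hlam1 : lam ≤ 1)
    (Qc : Measure Ω) (hQc : IsProbabilityMeasure Qc)
    (Qp : (Ω → ℝ) → ℝ) (hQplin : IsLinearOp Qp)
    (hQppos : ∀ X : Ω → ℝ, MemX X → (∀ ω, 0 ≤ X ω) → 0 ≤ Qp X)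
    (hQpone : Qp (fun _ => 1) = 1) (hQppure : PureAdditive Qp)
    (Qa : (Ω → ℝ) → ℝ) (hQalin : IsLinearOp Qa) (hQadom : Dominated Qa Eups)
    (hQasup : sSup (Qa '' testSet Emu α) = sSup (conjOp Eups '' testSet Emu α))
    (hQadec : ∀ X : Ω → ℝ, MemX X → Qa X = lam * ∫ ω, X ω ∂Qc + (1 - lam) * Qp X)
    (hH1 : HypH1 Emu Eups) (hH2 : HypH2 Emu α)
    (Xa : Ω → ℝ) (hXa : Xa ∈ testSet Emu α)
    (hXopt : conjOp Eups Xa = sSup (conjOp Eups '' testSet Emu α)) :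
    (1 - lam) * Qp Xa = 1 - lam :=
  pure_part_attains_one_general hEmu.monotoneOn hEmu.map_add_le hEups.monotoneOn hα0 hlam0
    (sub_nonneg.2 hlam1) hQplin hQppos hQpone hQppure hQalin hQadom hQasup hQadec hH1 hH2 hXa hXopt
end
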